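/- arXiv:1005.3136 — 6 statements merged into one kernel-verified Lean document; each statement's English description precedes it below -/
import Mathlib

section
/- Let C : [0,∞) → [0,∞) be a nondecreasing function and let (f_k) be a sequence of functions from [0,∞) to ℝ^m such that f_k(0) = 0 for every k and the total variation of f_k on [0,t] is at most C(t) for every k and every t ≥ 0. Then there exist a subsequence (f_{k_j}) and a function f : [0,∞) → ℝ^m whose total variation on [0,t] is at most C(t) for every t, such that f_{k_j}(t) converges to f(t) for every t ≥ 0. -/
open Filter Set

/-- Helly-type selection theorem: from a sequence of functions vanishing at `0` whose total
variation on `[0,t]` is bounded by a nondecreasing function `C t`, one can extract a pointwise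
convergent subsequence whose limit satisfies the same variation bound. -/
theorem helly_selection {m : ℕ} (C : ℝ → ℝ)
    (hC : MonotoneOn C (Set.Ici (0:ℝ))) (hC0 : ∀ t ≥ (0:ℝ), 0 ≤ C t)
    (f : ℕ → ℝ → EuclideanSpace ℝ (Fin m))
    (hf0 : ∀ k, f k 0 = 0)
    (hfv : ∀ k, ∀ t ≥ (0:ℝ), eVariationOn (f k) (Set.Icc 0 t) ≤ ENNReal.ofReal (C t)) :
    ∃ φ : ℕ → ℕ, StrictMono φ ∧ ∃ g : ℝ → EuclideanSpace ℝ (Fin m),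
      (∀ t ≥ (0:ℝ), eVariationOn g (Set.Icc 0 t) ≤ ENNReal.ofReal (C t)) ∧
      (∀ t ≥ (0:ℝ), Tendsto (fun j => f (φ j) t) atTop (nhds (g t))) := by
  classical
  -- first extraction: variations converge at rationals
  obtain ⟨W, -, φ, hφ, hW⟩ := (isCompact_univ (X := ℚ → ENNReal)).tendsto_subseq
    (x := fun k (q : ℚ) => eVariationOn (f k) (Set.Icc 0 (q : ℝ))) (fun _ => mem_univ _)
  rw [tendsto_pi_nhds] at hW
  set V : ℕ → ℝ → ENNReal := fun k t => eVariationOn (f (φ k)) (Set.Icc 0 t) with hV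
  set G : ℝ → ENNReal := fun t => limsup (fun k => V k t) atTop with hG
  have hGm : Monotone G := by
    intro s t hst
    exact limsup_le_limsup (Eventually.of_forall fun k =>
      eVariationOn.mono _ (Icc_subset_Icc_right hst))
  have hGC : ∀ t ≥ (0:ℝ), G t ≤ ENNReal.ofReal (C t) := by
    intro t ht
    exact limsup_le_of_le (h := Eventually.of_forall fun k => hfv (φ k) t ht)
  have hVG : ∀ q : ℚ, Tendsto (fun k => V k q) atTop (nhds (G q)) := by
    intro q
    have h : Tendsto (fun k => V k q) atTop (nhds (W q)) := hW q
    have : G q = W q := h.limsup_eq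
    rw [this]; exact h
  have hD : {x | ¬ ContinuousAt G x}.Countable := hGm.countable_not_continuousAt
  set E : Set ℝ := (range ((↑) : ℚ → ℝ) ∪ {x | ¬ ContinuousAt G x}) ∩ Ici 0 with hE
  have hEc : E.Countable := ((countable_range _).union hD).mono inter_subset_left
  have : Countable E := hEc.to_subtype
  -- second extraction
  have hK : IsCompact (Set.pi univ
      (fun t : E => Metric.closedBall (0 : EuclideanSpace ℝ (Fin m)) (C t))) :=
    isCompact_univ_pi fun t => isCompact_closedBall _ _
  obtain ⟨w, -, ψ, hψ, hw⟩ := hK.tendsto_subseq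
    (x := fun k (t : E) => f (φ k) t) (by
      intro k t _
      have ht : (0:ℝ) ≤ t := t.2.2
      have h1 := (eVariationOn.edist_le (f (φ k)) (s := Icc 0 (t:ℝ)) (x := (t:ℝ)) (y := 0)
        ⟨ht, le_rfl⟩ ⟨le_rfl, ht⟩).trans (hfv (φ k) t ht)
      rw [hf0, edist_dist] at h1
      exact (ENNReal.ofReal_le_ofReal_iff (hC0 t ht)).1 h1)
  rw [tendsto_pi_nhds] at hw
  have hconv : ∀ t ≥ (0:ℝ), ∃ y, Tendsto (fun j => f (φ (ψ j)) t) atTop (nhds y) := by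
    intro t ht
    by_cases htE : t ∈ E
    · exact ⟨w ⟨t, htE⟩, hw ⟨t, htE⟩⟩
    have hnr : t ∉ range ((↑) : ℚ → ℝ) := fun h => htE ⟨Or.inl h, ht⟩
    have hct : ContinuousAt G t := by
      by_contra h
      exact htE ⟨Or.inr h, ht⟩
    have ht0 : 0 < t := lt_of_le_of_ne ht (fun h => hnr ⟨0, by simpa using h⟩)
    have hfin : G t ≠ ⊤ := ne_top_of_le_ne_top ENNReal.ofReal_ne_top (hGC t ht)
    apply cauchySeq_tendsto_of_complete
    rw [Metric.cauchySeq_iff']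
    intro ε0 hε0
    obtain ⟨ε, hε, hεε⟩ : ∃ ε : ENNReal, 0 < ε ∧ (ε + ε) + (ε + (ε + ε)) = ENNReal.ofReal ε0 := by
      refine ⟨ENNReal.ofReal (ε0 / 5), by simpa using by positivity, ?_⟩
      rw [← ENNReal.ofReal_add, ← ENNReal.ofReal_add, ← ENNReal.ofReal_add]
      · congr 1; ring
      all_goals positivity
    have e1 : ∀ᶠ x in nhds t, G x < G t + ε :=
      hct.eventually_lt_const (ENNReal.lt_add_right hfin hε.ne')
    have e2 : ∀ᶠ x in nhds t, G t < G x + ε :=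
      (hct.add_const ε).eventually_const_lt (ENNReal.lt_add_right hfin hε.ne')
    obtain ⟨δ, hδ, hb⟩ := Metric.eventually_nhds_iff.1 (e1.and e2)
    obtain ⟨p, hp1, hp2⟩ := exists_rat_btwn (max_lt ht0 (sub_lt_self t hδ))
    obtain ⟨q, hq1, hq2⟩ := exists_rat_btwn (lt_add_of_pos_right t hδ)
    have hp0 : (0:ℝ) < p := (le_max_left _ _).trans_lt hp1
    have hpδ : t - δ < p := (le_max_right _ _).trans_lt hp1
    have hGp := (hb (y := (p:ℝ)) (by rw [Real.dist_eq, abs_lt]; constructor <;> linarith)).2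
    have hGq := (hb (y := (q:ℝ)) (by rw [Real.dist_eq, abs_lt]; constructor <;> linarith)).1
    have hGpq : G q < G p + (ε + ε) := by
      calc G q < G t + ε := hGq
        _ ≤ (G p + ε) + ε := by gcongr
        _ = _ := by ring
    have e3 : ∀ᶠ k in atTop, V k q < V k p + (ε + ε) :=
      (hVG q).eventually_lt ((hVG p).add_const _) hGpq
    have e4 : ∀ᶠ k in atTop, edist (f (φ k) t) (f (φ k) p) < ε + ε := by
      filter_upwards [e3] with k hk
      have hadd := eVariationOn.Icc_add_Icc (f (φ k)) (s := univ) hp0.le (hp2.trans hq1).le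
        (mem_univ _)
      simp only [univ_inter] at hadd
      have hVp : V k p ≠ ⊤ := ne_top_of_le_ne_top ENNReal.ofReal_ne_top (hfv (φ k) p hp0.le)
      have hk' : V k p + eVariationOn (f (φ k)) (Icc (p:ℝ) q) < V k p + (ε + ε) := by
        exact hadd.trans_lt hk
      exact (eVariationOn.edist_le (f (φ k)) (s := Icc (p:ℝ) q) ⟨hp2.le, hq1.le⟩ ⟨le_rfl, (hp2.trans hq1).le⟩).trans_lt
        ((ENNReal.add_lt_add_iff_left hVp).1 hk')
    have e5 := hψ.tendsto_atTop.eventually e4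
    have hpE : (p:ℝ) ∈ E := ⟨Or.inl ⟨p, rfl⟩, hp0.le⟩
    have hcp : CauchySeq (fun j => f (φ (ψ j)) p) := (hw ⟨p, hpE⟩).cauchySeq
    obtain ⟨N1, hN1⟩ := eventually_atTop.1 e5
    obtain ⟨N2, hN2⟩ := EMetric.cauchySeq_iff.1 hcp ε hε
    refine ⟨max N1 N2, fun n hn => ?_⟩
    have a1 := hN1 n ((le_max_left _ _).trans hn)
    have a2 := hN1 (max N1 N2) (le_max_left _ _)
    have a3 := hN2 n ((le_max_right _ _).trans hn) (max N1 N2) (le_max_right _ _)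
    rw [edist_comm] at a2
    have : edist (f (φ (ψ n)) t) (f (φ (ψ (max N1 N2))) t) < ENNReal.ofReal ε0 := by
      rw [← hεε]
      refine (edist_triangle _ (f (φ (ψ n)) p) _).trans_lt (ENNReal.add_lt_add a1 ?_)
      exact (edist_triangle _ (f (φ (ψ (max N1 N2))) p) _).trans_lt (ENNReal.add_lt_add a3 a2)
    rw [edist_dist] at this
    exact (ENNReal.ofReal_lt_ofReal_iff hε0).1 this
  choose! g hg using hconv
  refine ⟨φ ∘ ψ, hφ.comp hψ, g, ?_, hg⟩
  intro t ht
  by_contra! hlt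
  have := eVariationOn.lowerSemicontinuous_aux (F := fun j => f (φ (ψ j))) (p := atTop)
    (f := g) (s := Icc 0 t) (fun x hx => hg x hx.1) hlt
  obtain ⟨j, hj⟩ := this.exists
  exact absurd (hfv (φ (ψ j)) t ht) (not_le.2 hj)
end

section
/- Let τ_n, τ : [0,∞) → [0,∞) be strictly increasing unbounded functions such that τ_n(t) → τ(t) at every continuity point t of τ. Then the generalized inverses τ_n⁻¹ converge to τ⁻¹ uniformly on every compact subset of [0,∞). -/
open Filter Set

/-- The generalized (right-continuous) inverse of a function `κ : [0,∞) → [0,∞)`,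
`κ⁻¹(t) = inf {s ≥ 0 : κ(s) > t}`. -/
noncomputable def ginv (κ : ℝ → ℝ) (t : ℝ) : ℝ := sInf {s : ℝ | 0 ≤ s ∧ t < κ s}

lemma ginv_le_aux (κ : ℝ → ℝ) {p y : ℝ} (hp : 0 ≤ p) (h : y < κ p) : ginv κ y ≤ p :=
  csInf_le ⟨0, fun _ hs => hs.1⟩ ⟨hp, h⟩

lemma le_ginv_aux (κ : ℝ → ℝ) (hm : StrictMonoOn κ (Set.Ici 0))
    (hu : ∀ M : ℝ, ∃ s ≥ (0:ℝ), M < κ s) {q y : ℝ} (hq : 0 ≤ q) (h : κ q ≤ y) :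
    q ≤ ginv κ y := by
  refine le_csInf (hu y) ?_
  rintro s ⟨hs, hys⟩
  by_contra! hlt
  have := hm hs hq hlt
  linarith

lemma ginv_nonneg_aux (κ : ℝ → ℝ) (y : ℝ) : 0 ≤ ginv κ y :=
  Real.sInf_nonneg fun _ hs => hs.1

lemma exists_cont_aux (σ : ℝ → ℝ) (hm : StrictMonoOn σ (Set.Ici 0)) {a b : ℝ} (ha : 0 ≤ a)
    (hab : a < b) : ∃ p, a < p ∧ p < b ∧ ContinuousWithinAt σ (Set.Ici 0) p := by
  have hc := hm.monotoneOn.countable_not_continuousWithinAt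
  by_contra! hno
  have hsub : Set.Ioo a b ⊆ {x | x ∈ Set.Ici (0:ℝ) ∧ ¬ ContinuousWithinAt σ (Set.Ici 0) x} :=
    fun x hx => ⟨ha.trans hx.1.le, hno x hx.1 hx.2⟩
  have h1 : (Set.Ioo a b).Countable := hc.mono hsub
  have h2 := Cardinal.mk_Ioo_real hab
  have h3 := Cardinal.le_aleph0_iff_set_countable.2 h1
  rw [h2] at h3
  exact absurd h3 (not_le.2 Cardinal.aleph0_lt_continuum)

/-- If strictly increasing unbounded functions `τ n : [0,∞) → [0,∞)` converge to a strictly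
increasing unbounded `σ` at each continuity point of `σ`, then the generalized inverses
converge uniformly on every compact subset of `[0,∞)`. -/
theorem ginv_tendsto_uniformly_on_compacts (τ : ℕ → ℝ → ℝ) (σ : ℝ → ℝ)
    (hτmono : ∀ n, StrictMonoOn (τ n) (Set.Ici 0))
    (hσmono : StrictMonoOn σ (Set.Ici 0))
    (hτpos : ∀ n, ∀ t ≥ (0:ℝ), 0 ≤ τ n t)
    (hσpos : ∀ t ≥ (0:ℝ), 0 ≤ σ t)
    (hτunbdd : ∀ n, ∀ M : ℝ, ∃ s ≥ (0:ℝ), M < τ n s)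
    (hσunbdd : ∀ M : ℝ, ∃ s ≥ (0:ℝ), M < σ s)
    (hconv : ∀ t ≥ (0:ℝ), ContinuousWithinAt σ (Set.Ici 0) t →
      Tendsto (fun n => τ n t) atTop (nhds (σ t))) :
    ∀ K ⊆ Set.Ici (0:ℝ), IsCompact K →
      TendstoUniformlyOn (fun n => ginv (τ n)) (ginv σ) atTop K := by
  intro K hK hKc
  rw [← tendstoLocallyUniformlyOn_iff_tendstoUniformlyOn_of_compact hKc,
    Metric.tendstoLocallyUniformlyOn_iff]
  intro ε hε x hx
  have hg := ginv_nonneg_aux σ x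
  obtain ⟨p, hgp, hpε, hpc⟩ := exists_cont_aux σ hσmono hg
    (show ginv σ x < ginv σ x + ε / 2 by linarith)
  have hp0 : 0 ≤ p := hg.trans hgp.le
  have hxp : x < σ p := by
    by_contra! h
    obtain ⟨s, ⟨hs0, hxs⟩, hsp⟩ := exists_lt_of_csInf_lt (hσunbdd x) hgp
    have := hσmono hs0 hp0 hsp
    linarith
  obtain ⟨m, hxm, hmp⟩ := exists_between hxp
  have hup : ∀ᶠ n in atTop, m < τ n p := (hconv p hp0 hpc).eventually_const_lt hmp
  have hlow : ∃ l < x, (∀ y, l < y → ginv σ x - ε / 2 ≤ ginv σ y) ∧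
      ∀ᶠ n in atTop, ∀ y, l < y → ginv σ x - ε / 2 ≤ ginv (τ n) y := by
    rcases le_or_gt (ginv σ x - ε / 2) 0 with h | h
    · exact ⟨x - 1, by linarith, fun y _ => h.trans (ginv_nonneg_aux _ _),
        Eventually.of_forall fun n y _ => h.trans (ginv_nonneg_aux _ _)⟩
    · obtain ⟨q, hq1, hq2, hqc⟩ := exists_cont_aux σ hσmono h.le
        (show ginv σ x - ε / 2 < ginv σ x by linarith)
      have hq0 : 0 ≤ q := h.le.trans hq1.le
      have hqx : σ q < x := by
        obtain ⟨r, hr1, hr2⟩ := exists_between hq2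
        have hr0 : 0 ≤ r := hq0.trans hr1.le
        have h1 := hσmono hq0 hr0 hr1
        by_contra! h2
        have := ginv_le_aux σ hr0 (h2.trans_lt h1)
        linarith
      obtain ⟨l, hql, hlx⟩ := exists_between hqx
      refine ⟨l, hlx, fun y hy => hq1.le.trans
        (le_ginv_aux σ hσmono hσunbdd hq0 (hql.trans hy).le), ?_⟩
      filter_upwards [(hconv q hq0 hqc).eventually_lt_const hql] with n hn y hy
      exact hq1.le.trans (le_ginv_aux _ (hτmono n) (hτunbdd n) hq0 (hn.trans hy).le)
  obtain ⟨l, hlx, hl1, hl2⟩ := hlow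
  refine ⟨Set.Ioo l m, mem_nhdsWithin_of_mem_nhds (Ioo_mem_nhds hlx hxm), ?_⟩
  filter_upwards [hup, hl2] with n hn1 hn2 y hy
  have h1 := hl1 y hy.1
  have h2 := hn2 y hy.1
  have h3 := ginv_le_aux σ hp0 (hy.2.trans hmp)
  have h4 := ginv_le_aux (τ n) hp0 (hy.2.trans hn1)
  rw [Real.dist_eq, abs_lt]
  constructor <;> linarith
end

section
/- Let A be a maximal monotone operator on ℝ^m, let x ∈ D(A), and for each positive integer n let u_n ∈ ℝ^m satisfy n(x − u_n) ∈ A(u_n) (i.e. u_n = J_n x is the resolvent (1 + A/n)⁻¹ applied to x). Then u_n → x as n → ∞. -/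
open Filter Set
open scoped RealInnerProductSpace

/-- A multivalued operator on `ℝ^m` is monotone if
`⟨x₁ - x₂, y₁ - y₂⟩ ≥ 0` for all pairs in its graph. -/
def IsMonotoneOp {m : ℕ} (A : EuclideanSpace ℝ (Fin m) → Set (EuclideanSpace ℝ (Fin m))) : Prop :=
  ∀ x₁ y₁ x₂ y₂, y₁ ∈ A x₁ → y₂ ∈ A x₂ → (0:ℝ) ≤ ⟪x₁ - x₂, y₁ - y₂⟫

/-- A multivalued operator is maximal monotone if it is monotone and its graph is maximal
among graphs of monotone operators. -/
def IsMaximalMonotone {m : ℕ}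
    (A : EuclideanSpace ℝ (Fin m) → Set (EuclideanSpace ℝ (Fin m))) : Prop :=
  IsMonotoneOp A ∧
    ∀ x y, (∀ x₂ y₂, y₂ ∈ A x₂ → (0:ℝ) ≤ ⟪x - x₂, y - y₂⟫) → y ∈ A x

/-- For a maximal monotone operator `A` and `x ∈ D(A)`, the resolvents `u n = Jₙ x`,
characterized by `n (x - u n) ∈ A (u n)`, converge to `x` as `n → ∞`. -/
theorem resolvent_tendsto {m : ℕ}
    (A : EuclideanSpace ℝ (Fin m) → Set (EuclideanSpace ℝ (Fin m)))
    (hA : IsMaximalMonotone A) (x : EuclideanSpace ℝ (Fin m)) (hx : (A x).Nonempty)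
    (u : ℕ → EuclideanSpace ℝ (Fin m))
    (hu : ∀ n : ℕ, 0 < n → (n : ℝ) • (x - u n) ∈ A (u n)) :
    Tendsto u atTop (nhds x) := by
  obtain ⟨y, hy⟩ := hx
  rw [tendsto_iff_norm_sub_tendsto_zero]
  refine squeeze_zero' (Eventually.of_forall fun n => norm_nonneg _) ?_
    (tendsto_const_div_atTop_nhds_zero_nat ‖y‖)
  filter_upwards [eventually_gt_atTop 0] with n hn
  have hn' : (0:ℝ) < n := by exact_mod_cast hn
  have h := hA.1 x y (u n) _ hy (hu n hn)
  rw [inner_sub_right, real_inner_smul_right, real_inner_self_eq_norm_sq] at h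
  have h2 := real_inner_le_norm (x - u n) y
  rw [norm_sub_rev, le_div_iff₀ hn']
  rcases (norm_nonneg (x - u n)).eq_or_lt with h0 | h0
  · rw [← h0]; simp
  · refine le_of_mul_le_mul_left ?_ h0
    nlinarith
end

section
/- Let A be a maximal monotone operator on ℝ^m and for each positive integer n let J_n : ℝ^m → ℝ^m be a map satisfying n(x − J_n(x)) ∈ A(J_n(x)) for every x ∈ ℝ^m; set A_n(x) := n(x − J_n(x)). Let x ∈ ℝ^m with x ∉ D(A), and let (x_n) be a sequence in ℝ^m with x_n → x. Then liminf_{n→∞} ‖A_n(x_n)‖ = ∞. -/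
open Filter Set
open scoped RealInnerProductSpace ENNReal

/-- If `x ∉ D(A)` and `xₙ → x`, then the norms of the Yosida approximations
`Aₙ(xₙ) = n (xₙ - Jₙ xₙ)` satisfy `liminf ‖Aₙ(xₙ)‖ = ∞`. -/
theorem yosida_liminf_top {m : ℕ}
    (A : EuclideanSpace ℝ (Fin m) → Set (EuclideanSpace ℝ (Fin m)))
    (hA : IsMaximalMonotone A)
    (J : ℕ → EuclideanSpace ℝ (Fin m) → EuclideanSpace ℝ (Fin m))
    (hJ : ∀ n : ℕ, 0 < n → ∀ x, (n : ℝ) • (x - J n x) ∈ A (J n x))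
    (x : EuclideanSpace ℝ (Fin m)) (hx : A x = ∅)
    (xs : ℕ → EuclideanSpace ℝ (Fin m)) (hxs : Tendsto xs atTop (nhds x)) :
    liminf (fun n : ℕ => (‖(n : ℝ) • (xs n - J n (xs n))‖₊ : ℝ≥0∞)) atTop = ⊤ := by
  by_contra hne
  obtain ⟨c, hc1, hc2⟩ := ENNReal.lt_iff_exists_nnreal_btwn.1 (lt_top_iff_ne_top.2 hne)
  have hfr := frequently_lt_of_liminf_lt (by isBoundedDefault) hc1
  obtain ⟨φ, hφ, hb⟩ := extraction_of_frequently_atTop hfr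
  set y : ℕ → EuclideanSpace ℝ (Fin m) := fun n => (n : ℝ) • (xs n - J n (xs n)) with hy
  have hball : ∀ k, y (φ k) ∈ Metric.closedBall (0 : EuclideanSpace ℝ (Fin m)) (c : ℝ) := by
    intro k
    have h := hb k
    rw [ENNReal.coe_lt_coe] at h
    have h' : ‖y (φ k)‖ < (c : ℝ) := NNReal.coe_lt_coe.2 h
    simpa using h'.le
  obtain ⟨z, -, ψ, hψ, hz⟩ := (isCompact_closedBall _ _).tendsto_subseq hball
  have hn : Tendsto (fun k => φ (ψ k)) atTop atTop :=
    hφ.tendsto_atTop.comp hψ.tendsto_atTop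
  have hz' : Tendsto (fun k => y (φ (ψ k))) atTop (nhds z) := hz
  have hpos : ∀ᶠ k in atTop, 0 < φ (ψ k) := hn.eventually_gt_atTop 0
  have hJx : Tendsto (fun k => J (φ (ψ k)) (xs (φ (ψ k)))) atTop (nhds x) := by
    have h1 : Tendsto (fun k => ((φ (ψ k) : ℕ) : ℝ)⁻¹) atTop (nhds 0) :=
      (tendsto_inv_atTop_zero.comp tendsto_natCast_atTop_atTop).comp hn
    have h2 := (hxs.comp hn).sub (h1.smul hz')
    rw [zero_smul, sub_zero] at h2
    refine h2.congr' ?_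
    filter_upwards [hpos] with k hk
    have hk' : ((φ (ψ k) : ℕ) : ℝ) ≠ 0 := by exact_mod_cast hk.ne'
    simp [hy, smul_smul, inv_mul_cancel₀ hk']
  have hmem : z ∈ A x := by
    refine hA.2 x z fun x₂ y₂ h₂ => ?_
    have hl := (hJx.sub_const x₂).inner (𝕜 := ℝ) (hz'.sub_const y₂)
    refine ge_of_tendsto hl ?_
    filter_upwards [hpos] with k hk
    exact hA.1 _ _ _ _ (hJ _ hk _) h₂
  simp [hx] at hmem
end

section
/- Let A be a maximal monotone operator on ℝ^m whose domain D(A) has nonempty interior. Then there exist a ∈ ℝ^m, c₁ > 0 and c₂ ≥ 0 such that for every (x, y) ∈ Gr(A): ⟨x − a, y⟩ ≥ c₁‖y‖ − c₂‖x − a‖ − c₁c₂. -/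
open Set
open scoped RealInnerProductSpace

/-- For a maximal monotone operator whose domain has nonempty interior, there exist
`a`, `c₁ > 0`, `c₂ ≥ 0` with `⟨x - a, y⟩ ≥ c₁‖y‖ - c₂‖x - a‖ - c₁c₂` on the graph of `A`. -/
theorem maximal_monotone_interior_coercive {m : ℕ}
    (A : EuclideanSpace ℝ (Fin m) → Set (EuclideanSpace ℝ (Fin m)))
    (hA : IsMaximalMonotone A)
    (hD : (interior {x | (A x).Nonempty}).Nonempty) :
    ∃ (a : EuclideanSpace ℝ (Fin m)) (c₁ c₂ : ℝ), 0 < c₁ ∧ 0 ≤ c₂ ∧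
      ∀ x y : EuclideanSpace ℝ (Fin m), y ∈ A x →
        c₁ * ‖y‖ - c₂ * ‖x - a‖ - c₁ * c₂ ≤ ⟪x - a, y⟫ := by
  classical
  obtain ⟨a, ha⟩ := hD
  obtain ⟨ε, hε, hball⟩ := Metric.isOpen_iff.1 isOpen_interior a ha
  have hdom : ∀ u : EuclideanSpace ℝ (Fin m), ∃ v, ‖u‖ < ε → v ∈ A (a + u) := by
    intro u
    by_cases hu : ‖u‖ < ε
    · have h1 : a + u ∈ Metric.ball a ε := by simpa [Metric.mem_ball, dist_eq_norm] using hu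
      obtain ⟨v, hv⟩ := interior_subset (hball h1)
      exact ⟨v, fun _ => hv⟩
    · exact ⟨0, fun h => absurd h hu⟩
  choose v hv using hdom
  set r : ℝ := ε / 2 with hr
  have hr0 : 0 < r := by positivity
  let e : Fin m → EuclideanSpace ℝ (Fin m) := fun i => EuclideanSpace.single i (1 : ℝ)
  have he : ∀ i, ‖e i‖ = 1 := fun i => by simp [e]
  have hfin : (insert (0 : EuclideanSpace ℝ (Fin m))
      (range (fun i => r • e i) ∪ range (fun i => (-r) • e i))).Finite :=
    ((finite_range _).union (finite_range _)).insert _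
  obtain ⟨M, hM⟩ := (hfin.image (fun u => ‖v u‖)).bddAbove
  have hM' : ∀ u ∈ (insert (0 : EuclideanSpace ℝ (Fin m))
      (range (fun i => r • e i) ∪ range (fun i => (-r) • e i))), ‖v u‖ ≤ M :=
    fun u hu => hM (mem_image_of_mem _ hu)
  have hM0 : 0 ≤ M := (norm_nonneg _).trans (hM' 0 (mem_insert _ _))
  have key : ∀ u : EuclideanSpace ℝ (Fin m), ‖u‖ ≤ r → ‖v u‖ ≤ M → ∀ x y, y ∈ A x →
      ⟪u, y⟫ ≤ ⟪x - a, y⟫ + M * ‖x - a‖ + r * M := by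
    intro u hu hvu x y hy
    have h := hA.1 x y (a + u) (v u) hy (hv u (by linarith))
    have h2 : ⟪x - (a + u), y - v u⟫ = ⟪x - a, y⟫ - ⟪u, y⟫ - ⟪x - a, v u⟫ + ⟪u, v u⟫ := by
      rw [← sub_sub, inner_sub_left, inner_sub_right, inner_sub_right]; ring
    have h3 := (abs_le.1 (abs_real_inner_le_norm (x - a) (v u))).1
    have h4 := real_inner_le_norm u (v u)
    have h5 : ‖x - a‖ * ‖v u‖ ≤ ‖x - a‖ * M := by gcongr
    have h6 : ‖u‖ * ‖v u‖ ≤ r * M := by gcongr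
    linarith
  refine ⟨a, r / (m + 1), (m + 1) * M, by positivity, by positivity, ?_⟩
  intro x y hy
  set S : ℝ := ⟪x - a, y⟫ + M * ‖x - a‖ + r * M with hS
  have hS0 : 0 ≤ S := by
    have := key 0 (by simpa using hr0.le) (hM' 0 (mem_insert _ _)) x y hy
    simpa using this
  have hi : ∀ i, r * |y i| ≤ S := by
    intro i
    have h1 := key (r • e i) (by rw [norm_smul, he]; simp [abs_of_pos hr0])
      (hM' _ (Or.inr (Or.inl ⟨i, rfl⟩))) x y hy
    have h2 := key ((-r) • e i) (by rw [norm_smul, he]; simp [abs_of_pos hr0])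
      (hM' _ (Or.inr (Or.inr ⟨i, rfl⟩))) x y hy
    have h3 : ⟪e i, y⟫ = y i := by simp [e, EuclideanSpace.inner_single_left]
    rw [real_inner_smul_left, h3] at h1 h2
    rcases abs_cases (y i) with h | h <;> rw [h.1] <;> linarith
  have hn : ‖y‖ ≤ ∑ i, |y i| := by
    have h := (EuclideanSpace.basisFun (Fin m) ℝ).sum_repr y
    calc ‖y‖ = ‖∑ i, y i • e i‖ := by
          congr 1
          simpa [e] using h.symm
      _ ≤ ∑ i, ‖y i • e i‖ := norm_sum_le _ _
      _ = ∑ i, |y i| := by simp [norm_smul, he]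
  have hrn : r * ‖y‖ ≤ m * S := by
    calc r * ‖y‖ ≤ r * ∑ i, |y i| := by gcongr
      _ = ∑ i, r * |y i| := Finset.mul_sum _ _ _
      _ ≤ ∑ _i : Fin m, S := Finset.sum_le_sum fun i _ => hi i
      _ = m * S := by simp
  have hc : r / (m + 1) * ‖y‖ ≤ S := by
    rw [div_mul_eq_mul_div, div_le_iff₀ (by positivity)]
    linarith
  have hcc : r / ((m : ℝ) + 1) * ((m + 1) * M) = r * M := by
    field_simp
  have hlast : M * ‖x - a‖ ≤ (m + 1) * M * ‖x - a‖ := by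
    have : 0 ≤ (m : ℝ) * (M * ‖x - a‖) := by positivity
    linarith
  rw [hcc]
  linarith
end

section
/- Let A be a maximal monotone operator on ℝ^m whose domain D(A) has nonempty interior. Then there exist a ∈ ℝ^m, c₁ > 0 and c₂ ≥ 0 with the following property: whenever F : [0,∞) → ℝ^m is continuous, g : [0,∞) → ℝ^m is locally integrable and g(u) ∈ A(F(u)) for almost every u ≥ 0, one has for all 0 ≤ s ≤ t: ∫_s^t ⟨F(u) − a, g(u)⟩ du ≥ c₁ ∫_s^t ‖g(u)‖ du − c₂ ∫_s^t ‖F(u) − a‖ du − c₁c₂(t − s). -/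
open Set MeasureTheory
open scoped RealInnerProductSpace

theorem cepa_aux1 {m : ℕ}
    (A : EuclideanSpace ℝ (Fin m) → Set (EuclideanSpace ℝ (Fin m)))
    (hA : IsMonotoneOp A) (a h : EuclideanSpace ℝ (Fin m)) (r : ℝ) (hr : ‖h‖ ≤ r)
    (hD : (A (a + h)).Nonempty) :
    ∃ K : ℝ, 0 ≤ K ∧ ∀ x y, y ∈ A x → ⟪h, y⟫ - K * (‖x - a‖ + r) ≤ ⟪x - a, y⟫ := by
  obtain ⟨z, hz⟩ := hD
  refine ⟨‖z‖, norm_nonneg _, fun x y hy => ?_⟩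
  have h1 := hA x y (a + h) z hy hz
  have e : ⟪x - (a + h), y - z⟫ = ⟪x - a, y⟫ - ⟪h, y⟫ - ⟪x - a - h, z⟫ := by
    have : x - (a + h) = x - a - h := by abel
    rw [this, inner_sub_right, inner_sub_left (x - a) h y]
  have h2 : -(‖x - a - h‖ * ‖z‖) ≤ ⟪x - a - h, z⟫ :=
    (abs_le.1 (abs_real_inner_le_norm (x - a - h) z)).1
  have h3 : ‖x - a - h‖ ≤ ‖x - a‖ + r := (norm_sub_le _ _).trans (by linarith)
  have h4 := mul_le_mul_of_nonneg_right h3 (norm_nonneg z)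
  linarith

theorem cepa_norm_le {m : ℕ} (y : EuclideanSpace ℝ (Fin m)) : ‖y‖ ≤ ∑ i, |y i| := by
  have h : y = ∑ i, (y i) • EuclideanSpace.single i (1 : ℝ) := by
    ext j
    simp [Finset.sum_apply, Pi.single_apply]
  calc ‖y‖ = ‖∑ i, (y i) • EuclideanSpace.single i (1 : ℝ)‖ := by rw [← h]
    _ ≤ ∑ i, ‖(y i) • EuclideanSpace.single i (1 : ℝ)‖ := norm_sum_le _ _
    _ = ∑ i, |y i| := by simp [norm_smul]

theorem cepa_aux2 {m : ℕ}
    (A : EuclideanSpace ℝ (Fin m) → Set (EuclideanSpace ℝ (Fin m)))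
    (hA : IsMonotoneOp A)
    (hD : (interior {x | (A x).Nonempty}).Nonempty) :
    ∃ (a : EuclideanSpace ℝ (Fin m)) (c₁ c₂ : ℝ), 0 < c₁ ∧ 0 ≤ c₂ ∧
      ∀ x y, y ∈ A x → c₁ * ‖y‖ - c₂ * ‖x - a‖ - c₁ * c₂ ≤ ⟪x - a, y⟫ := by
  obtain ⟨a, ha⟩ := hD
  obtain ⟨r, hr, hb⟩ := Metric.nhds_basis_closedBall.mem_iff.1 (mem_interior_iff_mem_nhds.1 ha)
  have hne : ∀ h : EuclideanSpace ℝ (Fin m), ‖h‖ ≤ r → (A (a + h)).Nonempty := fun h hh =>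
    hb (by simpa [Metric.mem_closedBall, dist_eq_norm] using hh)
  have key := fun (h : EuclideanSpace ℝ (Fin m)) (hh : ‖h‖ ≤ r) =>
    cepa_aux1 A hA a h r hh (hne h hh)
  have hi : ∀ i : Fin m, ∃ K : ℝ, 0 ≤ K ∧ ∀ x y, y ∈ A x →
      r * |y i| - K * (‖x - a‖ + r) ≤ ⟪x - a, y⟫ := by
    intro i
    obtain ⟨K, hK, h1⟩ := key (EuclideanSpace.single i r) (by simp [abs_of_pos hr])
    obtain ⟨L, hL, h2⟩ := key (EuclideanSpace.single i (-r)) (by simp [abs_of_pos hr])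
    refine ⟨K + L, by positivity, fun x y hy => ?_⟩
    have h1 := h1 x y hy
    have h2 := h2 x y hy
    simp only [EuclideanSpace.inner_single_left, conj_trivial] at h1 h2
    have p1 : 0 ≤ K * (‖x - a‖ + r) := by positivity
    have p2 : 0 ≤ L * (‖x - a‖ + r) := by positivity
    rcases abs_cases (y i) with ⟨e, _⟩ | ⟨e, _⟩ <;> rw [e] <;> linarith
  choose K hK hKi using hi
  obtain ⟨K0, hK0, h0⟩ := key 0 (by simpa using hr.le)
  have hS : 0 ≤ ∑ i, K i := Finset.sum_nonneg fun i _ => hK i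
  have hm : (0 : ℝ) < m + 1 := by positivity
  refine ⟨a, r / (m + 1), K0 + ∑ i, K i, by positivity, by positivity, fun x y hy => ?_⟩
  have s0 := h0 x y hy
  have s1 := Finset.sum_le_sum fun i (_ : i ∈ Finset.univ) => hKi i x y hy
  rw [Finset.sum_sub_distrib, ← Finset.mul_sum, ← Finset.sum_mul] at s1
  simp only [Finset.sum_const, Finset.card_univ, Fintype.card_fin, nsmul_eq_mul,
    inner_zero_left] at s0 s1
  have s2 := mul_le_mul_of_nonneg_left (cepa_norm_le y) hr.le
  have tot : r * ‖y‖ - (K0 + ∑ i, K i) * (‖x - a‖ + r) ≤ (m + 1) * ⟪x - a, y⟫ := by linarith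
  have s3 : 0 ≤ (m : ℝ) * ((K0 + ∑ i, K i) * ‖x - a‖) := by positivity
  refine le_of_mul_le_mul_left ?_ hm
  refine le_trans ?_ tot
  have : ((m : ℝ) + 1) * (r / (m + 1) * ‖y‖ - (K0 + ∑ i, K i) * ‖x - a‖
      - r / (m + 1) * (K0 + ∑ i, K i)) =
      r * ‖y‖ - (m + 1) * ((K0 + ∑ i, K i) * ‖x - a‖) - r * (K0 + ∑ i, K i) := by
    field_simp
  rw [this]
  linarith

/-- Cépa's estimate (absolutely continuous case): for a maximal monotone operator whose domain
has nonempty interior, there exist `a`, `c₁ > 0`, `c₂ ≥ 0` such that whenever `F` is continuous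
on `[0,∞)`, `g` is locally integrable on `[0,∞)` and `g(u) ∈ A(F(u))` a.e., one has
`∫ₛᵗ ⟨F(u) - a, g(u)⟩ du ≥ c₁ ∫ₛᵗ ‖g(u)‖ du - c₂ ∫ₛᵗ ‖F(u) - a‖ du - c₁c₂ (t - s)`. -/
theorem cepa_estimate {m : ℕ}
    (A : EuclideanSpace ℝ (Fin m) → Set (EuclideanSpace ℝ (Fin m)))
    (hA : IsMaximalMonotone A)
    (hD : (interior {x | (A x).Nonempty}).Nonempty) :
    ∃ (a : EuclideanSpace ℝ (Fin m)) (c₁ c₂ : ℝ), 0 < c₁ ∧ 0 ≤ c₂ ∧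
      ∀ F g : ℝ → EuclideanSpace ℝ (Fin m),
        ContinuousOn F (Set.Ici 0) →
        LocallyIntegrableOn g (Set.Ici 0) →
        (∀ᵐ u ∂(volume.restrict (Set.Ici (0:ℝ))), g u ∈ A (F u)) →
        ∀ s t : ℝ, 0 ≤ s → s ≤ t →
          c₁ * (∫ u in s..t, ‖g u‖) - c₂ * (∫ u in s..t, ‖F u - a‖) - c₁ * c₂ * (t - s) ≤
            ∫ u in s..t, ⟪F u - a, g u⟫ := by
  obtain ⟨a, c₁, c₂, h1, h2, key⟩ := cepa_aux2 A hA.1 hD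
  refine ⟨a, c₁, c₂, h1, h2, fun F g hF hg hgA s t hs hst => ?_⟩
  have hsub : Icc s t ⊆ Ici (0 : ℝ) := fun u hu => hs.trans hu.1
  have hgi : IntegrableOn g (Icc s t) := hg.integrableOn_compact_subset hsub isCompact_Icc
  have hFc : ContinuousOn (fun u => F u - a) (Icc s t) := (hF.mono hsub).sub continuousOn_const
  have hFn : IntegrableOn (fun u => ‖F u - a‖) (Icc s t) :=
    hFc.norm.integrableOn_compact isCompact_Icc
  obtain ⟨C, hC⟩ := isCompact_Icc.exists_bound_of_continuousOn hFc
  have hin : IntegrableOn (fun u => ⟪F u - a, g u⟫) (Icc s t) := by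
    refine Integrable.mono' (hgi.norm.const_mul C)
      ((hFc.aestronglyMeasurable measurableSet_Icc).inner hgi.aestronglyMeasurable) ?_
    filter_upwards [ae_restrict_mem measurableSet_Icc] with u hu
    exact (norm_inner_le_norm _ _).trans
      (mul_le_mul_of_nonneg_right (hC u hu) (norm_nonneg _))
  have toI : ∀ f : ℝ → ℝ, IntegrableOn f (Icc s t) → IntervalIntegrable f volume s t :=
    fun f hf => (intervalIntegrable_iff_integrableOn_Icc_of_le hst).2 hf
  have i1 := (toI _ hgi.norm).const_mul c₁
  have i2 := (toI _ hFn).const_mul c₂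
  have i3 : IntervalIntegrable (fun _ : ℝ => c₁ * c₂) volume s t := intervalIntegrable_const
  have mono := intervalIntegral.integral_mono_ae_restrict hst ((i1.sub i2).sub i3) (toI _ hin) (by
    filter_upwards [ae_restrict_of_ae_restrict_of_subset hsub hgA] with u hu
    exact key _ _ hu)
  have e : (∫ u in s..t, (c₁ * ‖g u‖ - c₂ * ‖F u - a‖ - c₁ * c₂)) =
      c₁ * (∫ u in s..t, ‖g u‖) - c₂ * (∫ u in s..t, ‖F u - a‖) - c₁ * c₂ * (t - s) := by
    rw [intervalIntegral.integral_sub (i1.sub i2) i3, intervalIntegral.integral_sub i1 i2,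
      intervalIntegral.integral_const_mul, intervalIntegral.integral_const_mul,
      intervalIntegral.integral_const, smul_eq_mul, mul_comm (t - s)]
  rw [← e]
  exact mono
end
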